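/- arXiv:2105.02009 — 3 statements merged into one kernel-verified Lean document; each statement's English description precedes it below -/
import Mathlib

section
/- Half the sum of the positive coroots, ½λ, lies in the cocharacter lattice X^∨(T) when G is the special orthogonal group SO(n, 𝔽_q), and also when G is the spin group Spin(n, 𝔽_q) with n ≡ 0, 1, or −1 mod 8. -/
/-!
Statement 6 (Example of §3.2 of the paper).

The condition "`½λ ∈ X^∨(T)`" (with `λ` the sum of the positive coroots
determined by `B`) holds for `G = SO(n, 𝔽_q)` and for `G = Spin(n, 𝔽_q)` with
`n ≡ 0, ±1 mod 8`.

Modelling: we work at the level of root data, using the standard coordinates.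
Write `m = ⌊n/2⌋`.  The cocharacter lattice of a maximal torus is identified
with `ℤ^m` for `SO(n)` and with the coroot lattice
`{x ∈ ℤ^m : Σᵢ xᵢ even}` for `Spin(n)`.  The positive coroots are, for
`n = 2m+1` (type `B_m`): `eᵢ - eⱼ, eᵢ + eⱼ (i < j)` and `2eᵢ`; for `n = 2m`
(type `D_m`): `eᵢ - eⱼ, eᵢ + eⱼ (i < j)`.  `λ` is their sum, and the claim
"`½λ ∈ X^∨(T)`" reads: `λ = 2μ` for some `μ` in the lattice.
-/

noncomputable section

/-- The standard basis vector `eᵢ` of `ℤ^m`. -/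
def stdVec (m : ℕ) (i : Fin m) : Fin m → ℤ := Pi.single i 1

/-- The sum of the positive coroots of the root system of type `B_m`
(the case `G = SO(2m+1)` or `Spin(2m+1)`):
positive coroots are `eᵢ - eⱼ`, `eᵢ + eⱼ` for `i < j`, and `2eᵢ`. -/
def sumPosCorootsB (m : ℕ) : Fin m → ℤ :=
  (∑ p ∈ Finset.univ.filter (fun p : Fin m × Fin m => p.1 < p.2),
      ((stdVec m p.1 - stdVec m p.2) + (stdVec m p.1 + stdVec m p.2)))
    + ∑ i : Fin m, (2 : ℤ) • stdVec m i

/-- The sum of the positive coroots of the root system of type `D_m`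
(the case `G = SO(2m)` or `Spin(2m)`):
positive coroots are `eᵢ - eⱼ`, `eᵢ + eⱼ` for `i < j`. -/
def sumPosCorootsD (m : ℕ) : Fin m → ℤ :=
  ∑ p ∈ Finset.univ.filter (fun p : Fin m × Fin m => p.1 < p.2),
      ((stdVec m p.1 - stdVec m p.2) + (stdVec m p.1 + stdVec m p.2))

/-- The sum of the positive coroots for the root system of `SO(n)`/`Spin(n)`:
type `B_{n/2}` if `n` is odd, type `D_{n/2}` if `n` is even. -/
def sumPosCorootsSO (n : ℕ) : Fin (n / 2) → ℤ :=
  if n % 2 = 1 then sumPosCorootsB (n / 2) else sumPosCorootsD (n / 2)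

/-!
Grouping the positive coroots in pairs `(eᵢ - eⱼ) + (eᵢ + eⱼ) = 2eᵢ` shows that `½λ` is the
staircase `(m - 1, …, 1, 0)` in type `D_m` and `(m, …, 2, 1)` in type `B_m`, which is integral.
With `k = ⌊(n + 1) / 2⌋` its coordinate sum is `0 + 1 + ⋯ + (k - 1) = k.choose 2` in both cases,
and by Lucas' theorem `k.choose 2 ≡ ⌊k / 2⌋` modulo `2`.
-/

theorem even_choose_two_iff (k : ℕ) : Even (k.choose 2) ↔ Even (k / 2) := by
  have lucas : k.choose 2 ≡ k / 2 [MOD 2] := by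
    simpa using Choose.choose_modEq_choose_mod_mul_choose_div_nat (n := k) (k := 2) (p := 2)
  rw [Nat.even_iff, Nat.even_iff, lucas]

theorem sum_fst_of_fst_lt_snd {M : Type*} [AddCommMonoid M] {m : ℕ} (f : Fin m → M) :
    ∑ p : Fin m × Fin m with p.1 < p.2, f p.1 = ∑ i : Fin m, (m - 1 - i : ℕ) • f i := by
  simp only [Finset.sum_filter, Fintype.sum_prod_type]
  refine Finset.sum_congr rfl fun i _ ↦ ?_
  rw [← Finset.sum_filter, Finset.sum_const, Finset.filter_lt_eq_Ioi, Fin.card_Ioi]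

theorem sum_smul_stdVec {m : ℕ} (c : Fin m → ℤ) : ∑ i, c i • stdVec m i = c :=
  (pi_eq_sum_univ' c).symm

theorem sumPosCorootsD_eq (m : ℕ) :
    sumPosCorootsD m = (2 : ℤ) • fun i : Fin m ↦ ((m - 1 - i : ℕ) : ℤ) :=
  calc sumPosCorootsD m
      = ∑ p : Fin m × Fin m with p.1 < p.2, (2 : ℤ) • stdVec m p.1 :=
        Finset.sum_congr rfl fun p _ ↦ by rw [sub_add_add_cancel, two_smul]
    _ = (2 : ℤ) • ∑ i : Fin m, ((m - 1 - i : ℕ) : ℤ) • stdVec m i := by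
        simp only [← Finset.smul_sum, sum_fst_of_fst_lt_snd, natCast_zsmul]
    _ = (2 : ℤ) • fun i : Fin m ↦ ((m - 1 - i : ℕ) : ℤ) := by rw [sum_smul_stdVec]

theorem sumPosCorootsB_eq (m : ℕ) :
    sumPosCorootsB m = (2 : ℤ) • fun i : Fin m ↦ ((m - i : ℕ) : ℤ) := by
  have add_short : sumPosCorootsB m = sumPosCorootsD m + fun _ ↦ 2 :=
    congrArg (sumPosCorootsD m + ·) (sum_smul_stdVec fun _ ↦ 2)
  ext i
  simp only [add_short, sumPosCorootsD_eq, Pi.add_apply, Pi.smul_apply, smul_eq_mul]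
  omega

/-- The vector `½λ` in the standard coordinates of `ℤ^⌊n/2⌋`: `(m - 1, …, 1, 0)` for `n = 2m` and
`(m, …, 2, 1)` for `n = 2m + 1`. The subtractions in `ℕ` never truncate, as `i < ⌊n/2⌋`. -/
def halfSumPosCorootsSO (n : ℕ) : Fin (n / 2) → ℤ :=
  fun i ↦ (((n + 1) / 2 - 1 - i : ℕ) : ℤ)

theorem two_smul_halfSumPosCorootsSO (n : ℕ) :
    (2 : ℤ) • halfSumPosCorootsSO n = sumPosCorootsSO n := by
  unfold sumPosCorootsSO halfSumPosCorootsSO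
  split_ifs with n_odd
  · rw [sumPosCorootsB_eq, show (n + 1) / 2 - 1 = n / 2 by omega]
  · rw [sumPosCorootsD_eq, show (n + 1) / 2 = n / 2 by omega]

theorem two_smul_eq_sumPosCorootsSO_iff {n : ℕ} {μ : Fin (n / 2) → ℤ} :
    (2 : ℤ) • μ = sumPosCorootsSO n ↔ μ = halfSumPosCorootsSO n := by
  rw [← two_smul_halfSumPosCorootsSO, smul_right_inj two_ne_zero]

theorem sum_halfSumPosCorootsSO (n : ℕ) :
    ∑ i, halfSumPosCorootsSO n i = (((n + 1) / 2).choose 2 : ℕ) := by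
  have extend_range : ∑ i ∈ Finset.range (n / 2), ((n + 1) / 2 - 1 - i) =
      ∑ i ∈ Finset.range ((n + 1) / 2), ((n + 1) / 2 - 1 - i) :=
    Finset.sum_subset (Finset.range_mono (by omega)) fun i _ hi ↦ by
      rw [Finset.mem_range] at hi
      omega
  unfold halfSumPosCorootsSO
  rw [← Nat.cast_sum, Fin.sum_univ_eq_sum_range (fun i ↦ (n + 1) / 2 - 1 - i), extend_range,
    Finset.sum_range_reflect (fun i ↦ i), Finset.sum_range_id, Nat.choose_two_right]

theorem even_sum_halfSumPosCorootsSO_iff (n : ℕ) :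
    Even (∑ i, halfSumPosCorootsSO n i) ↔ n % 8 = 0 ∨ n % 8 = 1 ∨ n % 8 = 2 ∨ n % 8 = 7 := by
  rw [sum_halfSumPosCorootsSO, Int.even_coe_nat, even_choose_two_iff, Nat.even_iff]
  omega

theorem half_sum_pos_coroots_in_cocharacter_lattice_SO_Spin_general (n : ℕ) :
    (∃ μ : Fin (n / 2) → ℤ, (2 : ℤ) • μ = sumPosCorootsSO n) ∧
    ((∃ μ : Fin (n / 2) → ℤ, (2 : ℤ) • μ = sumPosCorootsSO n ∧ Even (∑ i, μ i)) ↔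
      n % 8 = 0 ∨ n % 8 = 1 ∨ n % 8 = 2 ∨ n % 8 = 7) := by
  simp only [two_smul_eq_sumPosCorootsSO_iff, exists_eq, exists_eq_left,
    even_sum_halfSumPosCorootsSO_iff, true_and]

/-- `½λ` lies in the cocharacter lattice `X^∨(T)`:
(1) for `G = SO(n, 𝔽_q)`, whose cocharacter lattice is all of `ℤ^{⌊n/2⌋}`;
(2) for `G = Spin(n, 𝔽_q)` with `n ≡ 0, ±1 mod 8`, whose cocharacter lattice
is the coroot lattice `{x ∈ ℤ^{⌊n/2⌋} : Σᵢ xᵢ even}`. -/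
theorem half_sum_pos_coroots_in_cocharacter_lattice_SO_Spin (n : ℕ) :
    -- `SO(n, 𝔽_q)`:
    (∃ μ : Fin (n / 2) → ℤ, (2 : ℤ) • μ = sumPosCorootsSO n) ∧
    -- `Spin(n, 𝔽_q)` with `n ≡ 0, ±1 mod 8`:
    (n % 8 = 0 ∨ n % 8 = 1 ∨ n % 8 = 7 →
      ∃ μ : Fin (n / 2) → ℤ,
        (2 : ℤ) • μ = sumPosCorootsSO n ∧ Even (∑ i, μ i)) := by
  obtain ⟨so, spin⟩ := half_sum_pos_coroots_in_cocharacter_lattice_SO_Spin_general n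
  exact ⟨so, fun h ↦ spin.mpr (by omega)⟩
end
end

section
/- Let H be a finite group and N a normal subgroup with H/N abelian, and let π be an irreducible self-dual complex representation of N. Then there exists an irreducible complex representation π' of H whose restriction to N contains π as a constituent, and for any such π' there exists a one-dimensional character ν of H, trivial on N, together with an isomorphism f: π' ≅ π'^∨ ⊗ ν⁻¹, where π'^∨ denotes the contragredient of π'. -/
/-!
Statement 9.

Let `H` be a finite group, `N` a normal subgroup with `H/N` abelian, and `π`
an irreducible self-dual complex representation of `N`.  Then there exists an
irreducible complex representation `π'` of `H` whose restriction to `N`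
contains `π` as a constituent, and for any such `π'` there exist a
one-dimensional character `ν` of `H`, trivial on `N`, and an isomorphism
`f : π' ≅ π'^∨ ⊗ ν⁻¹` (where `π'^∨` is the contragredient of `π'`).
-/

noncomputable section

/-- A finite-dimensional complex representation of `H`, bundled. -/
structure FinDimRep (H : Type) [Group H] where
  carrier : Type
  [acg : AddCommGroup carrier]
  [mod : Module ℂ carrier]
  [fd : FiniteDimensional ℂ carrier]
  ρ : Representation ℂ H carrier

attribute [instance] FinDimRep.acg FinDimRep.mod FinDimRep.fd

/-- A representation is irreducible. -/
def RepIrreducible {H V : Type} [Group H] [AddCommGroup V] [Module ℂ V]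
    (ρ : Representation ℂ H V) : Prop :=
  (∃ v : V, v ≠ 0) ∧
    ∀ W : Submodule ℂ V, (∀ (g : H), ∀ v ∈ W, ρ g v ∈ W) → W = ⊥ ∨ W = ⊤

/-- A representation is self-dual: isomorphic to its contragredient, i.e.
it carries a nondegenerate invariant pairing. -/
def RepSelfDual {H V : Type} [Group H] [AddCommGroup V] [Module ℂ V]
    (ρ : Representation ℂ H V) : Prop :=
  ∃ e : V ≃ₗ[ℂ] Module.Dual ℂ V, ∀ (g : H) (v w : V), e (ρ g v) (ρ g w) = e v w

/-- The restriction of `π' = ρ'.ρ` to the subgroup `N` contains `π` as a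
constituent: there is a nonzero `N`-equivariant map `π → Res_N π'`
(for complex representations of finite groups this is equivalent to `π`
being a direct summand of the restriction). -/
def ContainsRes {H : Type} [Group H] (N : Subgroup H) {V : Type}
    [AddCommGroup V] [Module ℂ V] (π : Representation ℂ ↥N V)
    (ρ' : FinDimRep H) : Prop :=
  ∃ φ : V →ₗ[ℂ] ρ'.carrier, φ ≠ 0 ∧
    ∀ (n : ↥N) (v : V), φ (π n v) = ρ'.ρ ↑n (φ v)

/-!
Some irreducible quotient of the induced representation `Ind π` receives a nonzero `N`-map from `π`,
because the `H`-translates of `π` span `Ind π`.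

Let `φ : π → π'` be a nonzero `N`-map with `π` and `π'` irreducible. Composing the contragredient of
`φ` with `π^∨ ≅ π` and `φ` gives a nonzero `N`-map `π'^∨ → π'`. The abelian group `H/N` acts by
conjugation on the finite-dimensional space `Hom_N(π'^∨, π')`, so this space contains a common
eigenvector. If `χ` is its eigencharacter, the eigenvector is a nonzero `H`-map `π'^∨ ⊗ χ → π'`; it
is surjective since `π'` is irreducible, and bijective by equality of dimensions. Hence `ν = χ⁻¹`.
-/

open Representation
open scoped TensorProduct
open scoped MonoidAlgebra

section Irreducible

variable {k G V : Type*} [Field k] [Monoid G] [AddCommGroup V] [Module k V]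

theorem isIrreducible_iff_forall_invariant_submodule {ρ : Representation k G V} :
    ρ.IsIrreducible ↔ (∃ v : V, v ≠ 0) ∧
      ∀ W : Submodule k V, (∀ g, ∀ v ∈ W, ρ g v ∈ W) → W = ⊥ ∨ W = ⊤ := by
  have inj : Function.Injective (Subrepresentation.toSubmodule (ρ := ρ)) :=
    Subrepresentation.toSubmodule_injective
  constructor
  · intro hρ
    refine ⟨?_, fun W hW ↦ ?_⟩
    · by_contra! hV
      have : Subsingleton V := ⟨fun v w ↦ (hV v).trans (hV w).symm⟩
      exact bot_ne_top (α := Subrepresentation ρ) (inj (Subsingleton.elim _ _))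
    · exact (eq_bot_or_eq_top (⟨W, hW⟩ : Subrepresentation ρ)).imp
        (congrArg Subrepresentation.toSubmodule) (congrArg Subrepresentation.toSubmodule)
  · rintro ⟨⟨v, hv⟩, hW⟩
    have : Nontrivial V := ⟨v, 0, hv⟩
    exact
      { exists_pair_ne := ⟨⊥, ⊤, fun h ↦ bot_ne_top (α := Submodule k V) <|
          congrArg Subrepresentation.toSubmodule h⟩
        eq_bot_or_eq_top := fun S ↦ (hW S.toSubmodule S.apply_mem_toSubmodule).imp
          (fun h ↦ inj h) (fun h ↦ inj h) }

theorem isIrreducible_toRepresentation_of_isAtom {ρ : Representation k G V}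
    {S : Subrepresentation ρ} (hS : IsAtom S) : S.toRepresentation.IsIrreducible := by
  refine isIrreducible_iff_forall_invariant_submodule.2 ⟨?_, fun W hW ↦ ?_⟩
  · obtain ⟨v, hv, hv0⟩ := S.toSubmodule.exists_mem_ne_zero_of_ne_bot
      fun h ↦ hS.1 (Subrepresentation.toSubmodule_injective h)
    exact ⟨⟨v, hv⟩, Subtype.coe_ne_coe.1 hv0⟩
  · let P : Subrepresentation ρ := ⟨W.map S.toSubmodule.subtype, by
      rintro g _ ⟨w, hw, rfl⟩
      exact ⟨_, hW g w hw, rfl⟩⟩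
    have hPS : P ≤ S := Submodule.map_subtype_le _ W
    have hPW : P.toSubmodule.comap S.toSubmodule.subtype = W :=
      Submodule.comap_map_eq_of_injective S.toSubmodule.subtype_injective W
    rcases hS.le_iff.1 hPS with hP | hP
    · left
      rw [← hPW, hP]
      exact S.toSubmodule.ker_subtype
    · right
      rw [← hPW, hP, Submodule.comap_subtype_self]

theorem isIrreducible_quotient_of_isCoatom {ρ : Representation k G V} {M : Subrepresentation ρ}
    (hM : IsCoatom M) : (ρ.quotient M.toSubmodule M.apply_mem_toSubmodule).IsIrreducible := by
  refine isIrreducible_iff_forall_invariant_submodule.2 ⟨?_, fun W hW ↦ ?_⟩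
  · have : Nontrivial (V ⧸ M.toSubmodule) := Submodule.Quotient.nontrivial_iff.2
      fun h ↦ hM.1 (Subrepresentation.toSubmodule_injective h)
    exact exists_ne 0
  · let P : Subrepresentation ρ := ⟨W.comap M.toSubmodule.mkQ, fun g v hv ↦ hW g _ hv⟩
    have hMP : M ≤ P := Submodule.le_comap_mkQ _ W
    have hPW : P.toSubmodule.map M.toSubmodule.mkQ = W :=
      Submodule.map_comap_eq_of_surjective M.toSubmodule.mkQ_surjective W
    rcases hM.le_iff.1 hMP with hP | hP
    · right
      rw [← hPW, hP]
      exact (Submodule.map_top _).trans (Submodule.range_mkQ _)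
    · left
      rw [← hPW, hP, Submodule.mkQ_map_self]

variable [FiniteDimensional k V] [Nontrivial V] (ρ : Representation k G V)

theorem exists_isAtom_subrepresentation : ∃ S : Subrepresentation ρ, IsAtom S := by
  have : IsArtinian k[G] ρ.asModule := isArtinian_of_tower k (inferInstanceAs (IsArtinian k V))
  have : Nontrivial ρ.asModule := ‹Nontrivial V›
  obtain ⟨S, hS⟩ := IsAtomic.exists_atom (Submodule k[G] ρ.asModule)
  exact ⟨_, (Subrepresentation.subrepresentationSubmoduleOrderIso.symm.isAtom_iff S).2 hS⟩

theorem exists_isCoatom_subrepresentation : ∃ M : Subrepresentation ρ, IsCoatom M := by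
  have : IsNoetherian k[G] ρ.asModule :=
    isNoetherian_of_tower k (inferInstanceAs (IsNoetherian k V))
  have : Nontrivial ρ.asModule := ‹Nontrivial V›
  obtain ⟨M, hM⟩ := IsCoatomic.exists_coatom (Submodule k[G] ρ.asModule)
  exact ⟨_, (Subrepresentation.subrepresentationSubmoduleOrderIso.symm.isCoatom_iff M).2 hM⟩

theorem exists_common_eigenvector [IsAlgClosed k] [IsMulCommutative G] :
    ∃ χ : G →* k, ∃ v ≠ 0, ∀ g, ρ g v = χ g • v := by
  obtain ⟨S, hS⟩ := exists_isAtom_subrepresentation ρ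
  have hirr := isIrreducible_toRepresentation_of_isAtom hS
  have hdim := IsIrreducible.finrank_eq_one_of_isMulCommutative S.toRepresentation
  obtain ⟨⟨v, hvS⟩, hv⟩ := (isIrreducible_iff_forall_invariant_submodule.1 hirr).1
  -- An operator on a line is multiplication by its determinant, so `χ := det` is multiplicative.
  refine ⟨LinearMap.det.comp S.toRepresentation, v, fun h ↦ hv (Subtype.ext h), fun g ↦ ?_⟩
  obtain ⟨c, hc, -⟩ :=
    LinearMap.existsUnique_eq_smul_id_of_finrank_eq_one hdim (S.toRepresentation g)
  have hdet : LinearMap.det (S.toRepresentation g) = c := by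
    rw [hc, LinearMap.det_smul, hdim, LinearMap.det_id, pow_one, mul_one]
  have hgv : ρ g v = c • v := congrArg Subtype.val (LinearMap.congr_fun hc ⟨v, hvS⟩)
  rw [hgv, MonoidHom.comp_apply, hdet]

end Irreducible

section Restriction

variable {k H W : Type*} [Semiring k] [Group H] [AddCommMonoid W] [Module k W]

/-- The restriction of a representation to a subgroup. -/
abbrev resSubgroup (N : Subgroup H) (ρ : Representation k H W) : Representation k N W :=
  ρ.comp N.subtype

end Restriction

section Induced

variable {k H V : Type*} [CommRing k] [Group H] [AddCommGroup V] [Module k V]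
  {N : Subgroup H} (π : Representation k N V)

theorem indMk_injective (h : H) : Function.Injective (IndV.mk N.subtype π h) := by
  classical
  have hcoind (v : V) : (Rep.indToCoind (Rep.of π) (IndV.mk N.subtype π h v)).1 =
      Rep.indToCoindAux (Rep.of π) h v := by
    simp only [LinearMap.coe_comp, Function.comp_apply, TensorProduct.mk_apply,
      Coinvariants.lift_mk, TensorProduct.lift.tmul, LinearEquiv.coe_coe,
      MonoidAlgebra.coeffLinearEquiv_apply, MonoidAlgebra.coeff_single,
      Finsupp.linearCombination_single, one_smul]
    rfl
  exact Function.LeftInverse.injective (g := fun x ↦ (Rep.indToCoind (Rep.of π) x).1 h)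
    fun v ↦ (congrFun (hcoind v) h).trans (Rep.indToCoindAux_self h v)

theorem indMk_mul (n : N) (h : H) (v : V) :
    IndV.mk N.subtype π (n * h) (π n v) = IndV.mk N.subtype π h v := by
  simpa using Coinvariants.mk_self_apply
    (tprod ((leftRegular k H).comp N.subtype) π) n (.single h 1 ⊗ₜ[k] v)

theorem iSup_range_indMk_out : ⨆ q : H ⧸ N, (IndV.mk N.subtype π q.out⁻¹).range = ⊤ := by
  set S := ⨆ q : H ⧸ N, (IndV.mk N.subtype π q.out⁻¹).range
  have hmk (h : H) (v : V) : IndV.mk N.subtype π h v ∈ S := by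
    obtain ⟨n, hn⟩ := QuotientGroup.mk_out_eq_mul N h⁻¹
    have hh : ((h⁻¹ : H) : H ⧸ N).out⁻¹ = (n⁻¹ : N) * h := by simp [hn]
    refine Submodule.mem_iSup_of_mem (h⁻¹ : H) ⟨π n⁻¹ v, ?_⟩
    rw [hh, indMk_mul]
  have : S.mkQ = 0 := IndV.hom_ext _ _ fun h ↦ LinearMap.ext fun v ↦
    (Submodule.Quotient.mk_eq_zero S).2 (hmk h v)
  rw [← S.ker_mkQ, this, LinearMap.ker_zero]

instance finite_indV [N.FiniteIndex] [Module.Finite k V] : Module.Finite k (IndV N.subtype π) :=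
  Module.finite_def.2 <| iSup_range_indMk_out π ▸ Module.Finite.iff_fg.1 inferInstance

instance nontrivial_indV [Nontrivial V] : Nontrivial (IndV N.subtype π) :=
  (indMk_injective π 1).nontrivial

/-- The unit `π → Res Ind π` of Frobenius reciprocity. -/
def indUnit : π.IntertwiningMap (resSubgroup N (ind N.subtype π)) where
  toLinearMap := IndV.mk N.subtype π 1
  isIntertwining' n := by
    ext v
    calc IndV.mk N.subtype π 1 (π n v) = IndV.mk N.subtype π (n * (1 * (n : H)⁻¹)) (π n v) := by
          rw [one_mul, mul_inv_cancel]
      _ = IndV.mk N.subtype π (1 * (n : H)⁻¹) v := indMk_mul π n _ v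
      _ = ind N.subtype π n (IndV.mk N.subtype π 1 v) := (ind_mk N.subtype π n 1 v).symm

theorem eq_zero_of_forall_apply_indUnit_eq_zero {W : Type*} [AddCommGroup W] [Module k W]
    {σ : Representation k H W} {f : (ind N.subtype π).IntertwiningMap σ}
    (hf : ∀ v, f (indUnit π v) = 0) : f = 0 := by
  refine IntertwiningMap.ext <| IndV.hom_ext _ _ fun h ↦ LinearMap.ext fun v ↦ ?_
  have hmk : ind N.subtype π h⁻¹ (indUnit π v) = IndV.mk N.subtype π h v := by
    exact (ind_mk N.subtype π h⁻¹ 1 v).trans (by rw [inv_inv, one_mul])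
  calc f (IndV.mk N.subtype π h v) = f (ind N.subtype π h⁻¹ (indUnit π v)) := by rw [hmk]
    _ = 0 := by rw [IntertwiningMap.isIntertwining, hf, map_zero]

end Induced

section Existence

universe u v w

theorem exists_isIrreducible_intertwiningMap_resSubgroup_ne_zero
    {k : Type u} {H : Type v} {V : Type w} [Field k] [Group H] {N : Subgroup H} [N.FiniteIndex]
    [AddCommGroup V] [Module k V] [FiniteDimensional k V] [Nontrivial V]
    (π : Representation k N V) :
    ∃ (W : Type max u v w) (_ : AddCommGroup W) (_ : Module k W) (ρ : Representation k H W),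
      FiniteDimensional k W ∧ ρ.IsIrreducible ∧
        ∃ φ : π.IntertwiningMap (resSubgroup N ρ), φ ≠ 0 := by
  obtain ⟨M, hM⟩ := exists_isCoatom_subrepresentation (ind N.subtype π)
  let ρ := (ind N.subtype π).quotient M.toSubmodule M.apply_mem_toSubmodule
  let p : (ind N.subtype π).IntertwiningMap ρ := ⟨M.toSubmodule.mkQ, fun _ ↦ rfl⟩
  let φ : π.IntertwiningMap (resSubgroup N ρ) :=
    ⟨p.toLinearMap ∘ₗ (indUnit π).toLinearMap, fun n ↦ LinearMap.ext fun v ↦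
      congrArg p ((indUnit π).isIntertwining _ _ n v)⟩
  refine ⟨_, _, _, ρ, inferInstance, isIrreducible_quotient_of_isCoatom hM, φ, fun hφ ↦ hM.1 ?_⟩
  have hp : p = 0 := eq_zero_of_forall_apply_indUnit_eq_zero π fun v ↦ congrArg (fun f ↦ f v) hφ
  have hmkQ : M.toSubmodule.mkQ = 0 := congrArg IntertwiningMap.toLinearMap hp
  apply Subrepresentation.toSubmodule_injective
  rw [← M.toSubmodule.ker_mkQ, hmkQ, LinearMap.ker_zero]
  rfl

end Existence

section Twist

variable {k G V : Type*} [CommSemiring k] [Monoid G] [AddCommMonoid V] [Module k V]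

/-- The twist `ρ ⊗ χ` of a representation by a linear character, realised on the space of `ρ`. -/
def twist (ρ : Representation k G V) (χ : G →* kˣ) : Representation k G V where
  toFun g := (χ g : k) • ρ g
  map_one' := by simp
  map_mul' g h := by simp [smul_smul, mul_comm]

theorem twist_apply (ρ : Representation k G V) (χ : G →* kˣ) (g : G) (v : V) :
    twist ρ χ g v = (χ g : k) • ρ g v := rfl

end Twist

section Dual

variable {k G V W : Type*} [CommSemiring k] [Group G] [AddCommMonoid V] [Module k V]
  [AddCommMonoid W] [Module k W]

/-- The contragredient `σ^∨ → ρ^∨` of an intertwining map `ρ → σ`. -/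
def dualIntertwiningMap {ρ : Representation k G V} {σ : Representation k G W}
    (f : ρ.IntertwiningMap σ) : σ.dual.IntertwiningMap ρ.dual where
  toLinearMap := f.toLinearMap.dualMap
  isIntertwining' g := by
    ext l v
    exact congrArg l (IntertwiningMap.isIntertwining _ _ f g⁻¹ v).symm

end Dual

section SelfDual

variable {k G V W : Type*} [Field k] [Group G] [AddCommGroup V] [Module k V]
  [AddCommGroup W] [Module k W]

theorem exists_intertwiningMap_dual_self_ne_zero {π : Representation k G V} [hπ : π.IsIrreducible]
    (e : π.Equiv π.dual) {ρ : Representation k G W} {φ : π.IntertwiningMap ρ} (hφ : φ ≠ 0) :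
    ∃ f : ρ.dual.IntertwiningMap ρ, f ≠ 0 := by
  have hinj : Function.Injective φ := (IsIrreducible.injective_or_eq_zero φ).resolve_right hφ
  obtain ⟨v, hv⟩ := (isIrreducible_iff_forall_invariant_submodule.1 hπ).1
  obtain ⟨l, hl⟩ := LinearMap.dualMap_surjective_of_injective (f := φ.toLinearMap) hinj (e v)
  refine ⟨φ.comp (e.symm.toIntertwiningMap.comp (dualIntertwiningMap φ)), fun h ↦ hv <| hinj ?_⟩
  calc φ v = φ (e.symm (φ.toLinearMap.dualMap l)) := by
        rw [hl, Representation.Equiv.symm_apply_apply]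
    _ = 0 := congrArg (fun f ↦ f l) h
    _ = φ 0 := (map_zero φ).symm

end SelfDual

section AbelianQuotient

variable {k H U W : Type*} [Field k] [IsAlgClosed k] [Group H]
  [AddCommGroup U] [Module k U] [FiniteDimensional k U]
  [AddCommGroup W] [Module k W] [FiniteDimensional k W]
  (N : Subgroup H) [N.Normal] [IsMulCommutative (H ⧸ N)]

theorem exists_intertwiningMap_twist_ne_zero
    {σ : Representation k H U} {ρ : Representation k H W}
    {f : (resSubgroup N σ).IntertwiningMap (resSubgroup N ρ)} (hf : f ≠ 0) :
    ∃ χ : H ⧸ N →* kˣ, ∃ b : (twist σ (χ.comp (QuotientGroup.mk' N))).IntertwiningMap ρ,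
      b ≠ 0 := by
  have : Nontrivial (invariants (resSubgroup N (linHom σ ρ))) :=
    (invariantsEquivIntertwiningMap (resSubgroup N σ)
      (resSubgroup N ρ)).toEquiv.nontrivial_congr.2 ⟨f, 0, hf⟩
  obtain ⟨χ, b, hb, hχ⟩ := exists_common_eigenvector ((linHom σ ρ).quotientToInvariants N)
  have hconj (h : H) : ρ h ∘ₗ b.1 ∘ₗ σ h⁻¹ = χ h • b.1 := congrArg Subtype.val (hχ h)
  refine ⟨χ.toHomUnits, ⟨b.1, fun h ↦ LinearMap.ext fun u ↦ ?_⟩,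
    fun h₀ ↦ hb <| Subtype.ext <| congrArg IntertwiningMap.toLinearMap h₀⟩
  simpa [twist_apply] using (LinearMap.congr_fun (hconj h) (σ h u)).symm

theorem exists_equiv_twist_dual {ρ : Representation k H W} (hρ : ρ.IsIrreducible)
    {f : (resSubgroup N ρ).dual.IntertwiningMap (resSubgroup N ρ)} (hf : f ≠ 0) :
    ∃ χ : H ⧸ N →* kˣ, Nonempty (ρ.Equiv (twist ρ.dual (χ.comp (QuotientGroup.mk' N)))) := by
  obtain ⟨χ, b, hb⟩ := exists_intertwiningMap_twist_ne_zero N (σ := ρ.dual) (ρ := ρ) (f := f) hf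
  have hsurj : Function.Surjective b := (IsIrreducible.surjective_or_eq_zero b).resolve_right hb
  have hinj : Function.Injective b :=
    (LinearMap.injective_iff_surjective_of_finrank_eq_finrank
      (f := b.toLinearMap) Subspace.dual_finrank_eq).2 hsurj
  exact ⟨χ, ⟨(b.ofBijective ⟨hinj, hsurj⟩).symm⟩⟩

end AbelianQuotient

section General

universe u v w x

theorem exists_extension_and_twisted_selfduality_general
    {k : Type u} {H : Type v} {V : Type w} [Field k] [IsAlgClosed k] [Group H]
    {N : Subgroup H} [N.Normal] [IsMulCommutative (H ⧸ N)]
    [AddCommGroup V] [Module k V] [FiniteDimensional k V]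
    {π : Representation k N V} (hirr : π.IsIrreducible) (hsd : Nonempty (π.Equiv π.dual)) :
    (N.FiniteIndex →
      ∃ (W : Type max u v w) (_ : AddCommGroup W) (_ : Module k W) (ρ : Representation k H W),
        FiniteDimensional k W ∧ ρ.IsIrreducible ∧
          ∃ φ : π.IntertwiningMap (resSubgroup N ρ), φ ≠ 0) ∧
    ∀ (W : Type x) [AddCommGroup W] [Module k W] [FiniteDimensional k W]
      (ρ : Representation k H W), ρ.IsIrreducible →
      (∃ φ : π.IntertwiningMap (resSubgroup N ρ), φ ≠ 0) →
      ∃ ν : H →* kˣ, (∀ n : N, ν n = 1) ∧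
        ∃ f : W ≃ₗ[k] Module.Dual k W, ∀ g v, f (ρ g v) = (ν g : k)⁻¹ • ρ.dual g (f v) := by
  refine ⟨fun _ ↦ ?_, fun W _ _ _ ρ hρ ⟨φ, hφ⟩ ↦ ?_⟩
  · obtain ⟨v, hv⟩ := (isIrreducible_iff_forall_invariant_submodule.1 hirr).1
    have : Nontrivial V := ⟨v, 0, hv⟩
    exact exists_isIrreducible_intertwiningMap_resSubgroup_ne_zero π
  · obtain ⟨e⟩ := hsd
    obtain ⟨b, hb⟩ := exists_intertwiningMap_dual_self_ne_zero e hφ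
    obtain ⟨χ, ⟨f⟩⟩ := exists_equiv_twist_dual N hρ hb
    refine ⟨χ⁻¹.comp (QuotientGroup.mk' N), fun n ↦ ?_, f.toLinearEquiv, fun g v ↦ ?_⟩
    · simp [(QuotientGroup.eq_one_iff (n : H)).2 n.2]
    · simpa [twist_apply] using f.toIntertwiningMap.isIntertwining _ _ g v

end General

section Complex

variable {H V : Type} [Group H] [AddCommGroup V] [Module ℂ V]

theorem repIrreducible_iff_isIrreducible {ρ : Representation ℂ H V} :
    RepIrreducible ρ ↔ ρ.IsIrreducible :=
  isIrreducible_iff_forall_invariant_submodule.symm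

theorem RepSelfDual.nonempty_equiv_dual {ρ : Representation ℂ H V} (h : RepSelfDual ρ) :
    Nonempty (ρ.Equiv ρ.dual) := by
  obtain ⟨e, he⟩ := h
  refine ⟨.mk e fun g ↦ ?_⟩
  ext v w
  simpa [Module.Dual.transpose_apply] using he g v (ρ g⁻¹ w)

theorem containsRes_iff {N : Subgroup H} {π : Representation ℂ N V} {π' : FinDimRep H} :
    ContainsRes N π π' ↔ ∃ φ : π.IntertwiningMap (resSubgroup N π'.ρ), φ ≠ 0 := by
  constructor
  · rintro ⟨φ, hφ, h⟩
    exact ⟨⟨φ, fun n ↦ LinearMap.ext (h n)⟩, fun h₀ ↦ hφ (congrArg IntertwiningMap.toLinearMap h₀)⟩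
  · rintro ⟨φ, hφ⟩
    exact ⟨φ.toLinearMap, fun h₀ ↦ hφ (IntertwiningMap.ext h₀), φ.isIntertwining _ _⟩

end Complex

theorem exists_extension_and_twisted_selfduality
    (H : Type) [Group H] [Finite H]
    (N : Subgroup H) [N.Normal]
    (habel : ∀ a b : H ⧸ N, a * b = b * a)
    (V : Type) [AddCommGroup V] [Module ℂ V] [FiniteDimensional ℂ V]
    (π : Representation ℂ ↥N V)
    (hirr : RepIrreducible π) (hsd : RepSelfDual π) :
    -- there exists an irreducible `π'` of `H` whose restriction to `N`
    -- contains `π` …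
    (∃ π' : FinDimRep H, RepIrreducible π'.ρ ∧ ContainsRes N π π') ∧
    -- … and for any such `π'` there are `ν : H → ℂˣ` trivial on `N` and an
    -- isomorphism `f : π' ≅ π'^∨ ⊗ ν⁻¹`:
    ∀ π' : FinDimRep H, RepIrreducible π'.ρ → ContainsRes N π π' →
      ∃ ν : H →* ℂˣ, (∀ n : ↥N, ν ↑n = 1) ∧
        ∃ f : π'.carrier ≃ₗ[ℂ] Module.Dual ℂ π'.carrier,
          ∀ (g : H) (v : π'.carrier),
            f (π'.ρ g v) = ((ν g : ℂ))⁻¹ • (π'.ρ.dual g (f v)) := by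
  have : IsMulCommutative (H ⧸ N) := ⟨⟨habel⟩⟩
  obtain ⟨hex, htwist⟩ := exists_extension_and_twisted_selfduality_general
    (repIrreducible_iff_isIrreducible.1 hirr) hsd.nonempty_equiv_dual
  refine ⟨?_, fun π' hπ' hφ ↦ htwist _ π'.ρ (repIrreducible_iff_isIrreducible.1 hπ')
    (containsRes_iff.1 hφ)⟩
  obtain ⟨W, _, _, ρ, _, hρ, hφ⟩ := hex inferInstance
  exact ⟨⟨W, ρ⟩, repIrreducible_iff_isIrreducible.2 hρ, containsRes_iff.2 hφ⟩
end
end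

section
/- Let H be a finite group, N a normal subgroup with H/N abelian, π an irreducible self-dual complex representation of N, and π' an irreducible complex representation of H whose restriction to N is multiplicity-free and contains π as a constituent, with f: π' ≅ π'^∨ ⊗ ν⁻¹ for a one-dimensional character ν of H trivial on N. Then sgn(π) = sgn(π'), where sgn(π') is the sign (symmetric versus skew-symmetric) of the associated form B_f. -/
/-!
Statement 11.

Let `H` be a finite group, `N` a normal subgroup with `H/N` abelian, `π` an
irreducible self-dual complex representation of `N`, and `π'` an irreducible
complex representation of `H` whose restriction to `N` is multiplicity-free
and contains `π` as a constituent, equipped with `f : π' ≅ π'^∨ ⊗ ν⁻¹` for a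
one-dimensional character `ν` of `H` trivial on `N`.  Then
`sgn(π) = sgn(π')`, where `sgn(π)` is the Frobenius–Schur indicator of `π`
(symmetric vs. skew-symmetric invariant form) and `sgn(π')` the sign
(symmetric vs. skew-symmetric) of the form `B_f(u,v) = f(u)(v)` associated
with `f`.
-/

noncomputable section

/-- A `ρ`-invariant bilinear form. -/
def InvariantForm {H V : Type} [Group H] [AddCommGroup V] [Module ℂ V]
    (ρ : Representation ℂ H V) (B : V →ₗ[ℂ] V →ₗ[ℂ] ℂ) : Prop :=
  ∀ (g : H) (u v : V), B (ρ g u) (ρ g v) = B u v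

/-- The space of equivariant linear maps between two representations. -/
def equivHoms {H W V : Type} [Group H] [AddCommGroup W] [Module ℂ W]
    [AddCommGroup V] [Module ℂ V]
    (τ : Representation ℂ H W) (ρ : Representation ℂ H V) :
    Submodule ℂ (W →ₗ[ℂ] V) where
  carrier := {φ | ∀ (n : H) (w : W), φ (τ n w) = ρ n (φ w)}
  add_mem' := by
    intro φ ψ hφ hψ n w
    simp [hφ n w, hψ n w]
  zero_mem' := by
    intro n w
    simp
  smul_mem' := by
    intro c φ hφ n w
    simp [hφ n w]

/-- The restriction of `π'` to the subgroup `N` is multiplicity-free: every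
irreducible representation of `N` has at most a one-dimensional space of
equivariant maps into the restriction. -/
def MultFreeRes {H : Type} [Group H] (N : Subgroup H) {V' : Type}
    [AddCommGroup V'] [Module ℂ V'] (π' : Representation ℂ H V') : Prop :=
  ∀ (W : Type) [AddCommGroup W] [Module ℂ W] [FiniteDimensional ℂ W]
    (τ : Representation ℂ ↥N W), RepIrreducible τ →
      Module.finrank ℂ ↥(equivHoms τ (π'.comp N.subtype)) ≤ 1

/-!
A semi-invariant form on an irreducible representation is zero as soon as its radical is nonzero.
In particular `B` is nondegenerate, so it identifies the semi-invariant pairings between `π` and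
`π'` with the intertwining maps `π' → π`; by complete reducibility these form a line because the
maps `π → π'` do. Let `φ : π → π'` be the inclusion and `P` an equivariant projection onto it. Then
`f (φ v) w = t * B v (P w)` and `f w (φ v) = t * B (P w) v`, with the same `t` because the two
agree on `w = φ u`, and `t ≠ 0` because `f` is nondegenerate. A relation `B u v = ε * B v u` makes
`f - ε • f.flip` kill the image of `φ`, hence vanish; the converse is restriction along `φ`.
-/

open Representation

section Semisimple

variable {k G V W : Type*} [Field k] [Monoid G] [AddCommGroup V] [Module k V]
  [AddCommGroup W] [Module k W] {ρ : Representation k G V} {σ : Representation k G W}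

theorem exists_intertwiningMap_leftInverse [ρ.IsIrreducible] [σ.IsSemisimpleRepresentation]
    {φ : IntertwiningMap ρ σ} (hφ : φ ≠ 0) : ∃ P : IntertwiningMap σ ρ, ∀ v, P (φ v) = v := by
  have := (isSemisimpleRepresentation_iff_isSemisimpleModule_asModule σ).1 inferInstance
  have hinj := (IsIrreducible.injective_or_eq_zero φ).resolve_right hφ
  obtain ⟨P, hP⟩ := IsSemisimpleModule.extension_property
    (IntertwiningMap.equivLinearMapAsModule ρ σ φ) hinj LinearMap.id
  exact ⟨(IntertwiningMap.equivLinearMapAsModule σ ρ).symm P, LinearMap.congr_fun hP⟩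

theorem exists_intertwiningMap_rightInverse [ρ.IsIrreducible] [σ.IsSemisimpleRepresentation]
    {P : IntertwiningMap σ ρ} (hP : P ≠ 0) : ∃ φ : IntertwiningMap ρ σ, ∀ v, P (φ v) = v := by
  have := (isSemisimpleRepresentation_iff_isSemisimpleModule_asModule σ).1 inferInstance
  have hsurj := (IsIrreducible.surjective_or_eq_zero P).resolve_right hP
  obtain ⟨φ, hφ⟩ := IsSemisimpleModule.lifting_property
    (IntertwiningMap.equivLinearMapAsModule σ ρ P) hsurj LinearMap.id
  exact ⟨(IntertwiningMap.equivLinearMapAsModule ρ σ).symm φ, LinearMap.congr_fun hφ⟩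

theorem finrank_intertwiningMap_swap_eq_one [ρ.IsIrreducible]
    [σ.IsSemisimpleRepresentation] (hmult : Module.finrank k (IntertwiningMap ρ σ) = 1) :
    Module.finrank k (IntertwiningMap σ ρ) = 1 := by
  obtain ⟨φ, hφ, hspan⟩ := finrank_eq_one_iff'.1 hmult
  obtain ⟨P, hPφ⟩ := exists_intertwiningMap_leftInverse hφ
  have hP : P ≠ 0 := by
    rintro rfl
    have hzero (v : V) : v = 0 := (hPφ v).symm
    exact hφ (IntertwiningMap.ext (LinearMap.ext fun v ↦ by simp [hzero v]))
  refine (finrank_eq_one_iff_of_nonzero' P hP).2 fun T ↦ ?_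
  obtain ⟨t, ht⟩ := hspan ((φ.comp T).comp φ)
  have hTφ (v : V) : T (φ v) = t • v := by
    simpa [hPφ] using congr(P ($ht v)).symm
  refine ⟨t, ?_⟩
  by_contra hne
  obtain ⟨s, hs⟩ := exists_intertwiningMap_rightInverse (sub_ne_zero.2 hne)
  obtain ⟨c, rfl⟩ := hspan s
  have hzero (v : V) : v = 0 := by simpa [hPφ, hTφ] using (hs v).symm
  exact hφ (IntertwiningMap.ext (LinearMap.ext fun v ↦ by simp [hzero v]))

end Semisimple

/-- A pairing `B` of two representations which the group multiplies by `χ`, as the form of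
`f : π' ≅ π'^∨ ⊗ ν⁻¹` is multiplied by `ν⁻¹`. The factor `χ` is an arbitrary function: when `B ≠ 0`
it is automatically multiplicative. -/
def IsSemiInvariantPairing {k G V W : Type*} [Field k] [Monoid G] [AddCommGroup V] [Module k V]
    [AddCommGroup W] [Module k W] (ρ : Representation k G V) (σ : Representation k G W)
    (χ : G → k) (B : V →ₗ[k] W →ₗ[k] k) : Prop :=
  ∀ g v w, B (ρ g v) (σ g w) = χ g * B v w

namespace IsSemiInvariantPairing

section Monoid

variable {k G V W : Type*} [Field k] [Monoid G] [AddCommGroup V] [Module k V]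
  [AddCommGroup W] [Module k W] {ρ : Representation k G V} {σ : Representation k G W}
  {χ : G → k} {C : V →ₗ[k] W →ₗ[k] k}

theorem flip (hC : IsSemiInvariantPairing ρ σ χ C) : IsSemiInvariantPairing σ ρ χ C.flip :=
  fun g w v ↦ hC g v w

theorem sub_smul {C' : V →ₗ[k] W →ₗ[k] k} (hC : IsSemiInvariantPairing ρ σ χ C)
    (hC' : IsSemiInvariantPairing ρ σ χ C') (ε : k) :
    IsSemiInvariantPairing ρ σ χ (C - ε • C') := fun g v w ↦ by
  simp only [LinearMap.sub_apply, LinearMap.smul_apply, hC g v w, hC' g v w, smul_eq_mul]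
  ring

theorem comp_left {U : Type*} [AddCommGroup U] [Module k U] {τ : Representation k G U}
    (hC : IsSemiInvariantPairing ρ σ χ C) (φ : IntertwiningMap τ ρ) :
    IsSemiInvariantPairing τ σ χ (C ∘ₗ φ.toLinearMap) := fun g u w ↦ by
  simpa [φ.isIntertwining] using hC g (φ u) w

end Monoid

section Group

variable {k G V W : Type*} [Field k] [Group G] [AddCommGroup V] [Module k V]
  [AddCommGroup W] [Module k W] {ρ : Representation k G V} {σ : Representation k G W}
  {χ : G → k} {B : V →ₗ[k] V →ₗ[k] k} {C : V →ₗ[k] W →ₗ[k] k}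

theorem apply_left (hC : IsSemiInvariantPairing ρ σ χ C) (g : G) (v : V) (w : W) :
    C (ρ g v) w = χ g * C v (σ g⁻¹ w) := by
  simpa using hC g v (σ g⁻¹ w)

theorem apply_right (hC : IsSemiInvariantPairing ρ σ χ C) (g : G) (v : V) (w : W) :
    C v (σ g w) = χ g * C (ρ g⁻¹ v) w :=
  hC.flip.apply_left g w v

/-- The left radical of a semi-invariant pairing, as a subrepresentation: this is what ties
nondegeneracy to irreducibility. -/
def leftRadical (hC : IsSemiInvariantPairing ρ σ χ C) : Subrepresentation ρ where
  toSubmodule := LinearMap.ker C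
  apply_mem_toSubmodule g v hv := by
    ext w
    rw [hC.apply_left, LinearMap.mem_ker.1 hv, LinearMap.zero_apply, mul_zero,
      LinearMap.zero_apply]

theorem injective_of_ne_zero [ρ.IsIrreducible] (hC : IsSemiInvariantPairing ρ σ χ C)
    (hC0 : C ≠ 0) : Function.Injective C := by
  rcases eq_bot_or_eq_top hC.leftRadical with hrad | hrad
  · exact LinearMap.ker_eq_bot.1 congr(($hrad).toSubmodule)
  · exact absurd (LinearMap.ker_eq_top.1 congr(($hrad).toSubmodule)) hC0

theorem eq_zero_of_apply_eq_zero [ρ.IsIrreducible] (hC : IsSemiInvariantPairing ρ σ χ C)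
    {v : V} (hv : v ≠ 0) (hCv : C v = 0) : C = 0 := by
  by_contra hC0
  exact hv ((map_eq_zero_iff C (hC.injective_of_ne_zero hC0)).1 hCv)

theorem isPerfPair_of_ne_zero [FiniteDimensional k V] [ρ.IsIrreducible]
    (hB : IsSemiInvariantPairing ρ ρ χ B) (hB0 : B ≠ 0) : B.IsPerfPair :=
  .of_injective (hB.injective_of_ne_zero hB0)
    (hB.flip.injective_of_ne_zero fun h ↦ hB0 (LinearMap.flip_inj h))

theorem exists_intertwiningMap_apply_eq (hB : IsSemiInvariantPairing ρ ρ χ B) [B.IsPerfPair]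
    (hC : IsSemiInvariantPairing ρ σ χ C) :
    ∃ T : IntertwiningMap σ ρ, ∀ v w, C v w = B v (T w) := by
  let T : W →ₗ[k] V := B.flip.toPerfPair.symm ∘ₗ C.flip
  have hT (v : V) (w : W) : C v w = B v (T w) :=
    congr($(B.flip.apply_symm_toPerfPair_self (C.flip w)) v).symm
  refine ⟨T.intertwiningMap_of_isIntertwiningMap σ ρ fun g w ↦ ?_, hT⟩
  refine (LinearMap.IsPerfPair.bijective_right B).injective (LinearMap.ext fun v ↦ ?_)
  calc B v (T (σ g w)) = C v (σ g w) := (hT _ _).symm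
    _ = χ g * C (ρ g⁻¹ v) w := hC.apply_right g v w
    _ = χ g * B (ρ g⁻¹ v) (T w) := by rw [hT]
    _ = B v (ρ g (T w)) := (hB.apply_right g v (T w)).symm

theorem exists_apply_eq_mul [ρ.IsIrreducible] [FiniteDimensional k V]
    (hB : IsSemiInvariantPairing ρ ρ χ B) (hB0 : B ≠ 0)
    (hmult : Module.finrank k (IntertwiningMap σ ρ) = 1) {P : IntertwiningMap σ ρ} (hP : P ≠ 0)
    (hC : IsSemiInvariantPairing ρ σ χ C) : ∃ t : k, ∀ v w, C v w = t * B v (P w) := by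
  have := hB.isPerfPair_of_ne_zero hB0
  obtain ⟨T, hT⟩ := hB.exists_intertwiningMap_apply_eq hC
  obtain ⟨t, rfl⟩ := (finrank_eq_one_iff_of_nonzero' P hP).1 hmult T
  exact ⟨t, fun v w ↦ by simp [hT]⟩

theorem exists_apply_eq_mul_of_leftInverse [FiniteDimensional k V] [ρ.IsIrreducible]
    (hB : IsSemiInvariantPairing ρ ρ χ B) (hB0 : B ≠ 0)
    (hmult : Module.finrank k (IntertwiningMap σ ρ) = 1) {φ : IntertwiningMap ρ σ}
    {P : IntertwiningMap σ ρ} (hPφ : ∀ v, P (φ v) = v) {f : W →ₗ[k] W →ₗ[k] k}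
    (hf : IsSemiInvariantPairing σ σ χ f) :
    ∃ t : k, ∀ v w, f (φ v) w = t * B v (P w) ∧ f w (φ v) = t * B (P w) v := by
  obtain ⟨u₀, v₀, hB₀⟩ : ∃ u v, B u v ≠ 0 := by
    by_contra! h
    exact hB0 (LinearMap.ext₂ h)
  have hP : P ≠ 0 := by
    rintro rfl
    have hu₀ : u₀ = 0 := (hPφ u₀).symm
    exact hB₀ (by rw [hu₀, LinearMap.map_zero₂])
  obtain ⟨t, ht⟩ := hB.exists_apply_eq_mul hB0 hmult hP (hf.comp_left φ)
  obtain ⟨t', ht'⟩ := hB.flip.exists_apply_eq_mul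
    (fun h ↦ hB0 (LinearMap.flip_inj h)) hmult hP (hf.flip.comp_left φ)
  have htt' : t' = t := mul_right_cancel₀ hB₀ <| by
    calc t' * B u₀ v₀ = f (φ u₀) (φ v₀) := by simpa [hPφ] using (ht' v₀ (φ u₀)).symm
      _ = t * B u₀ v₀ := by simpa [hPφ] using ht u₀ (φ v₀)
  exact ⟨t, fun v w ↦ ⟨ht v w, htt' ▸ ht' v w⟩⟩

end Group

end IsSemiInvariantPairing

theorem RepIrreducible.isIrreducible {G V : Type} [Group G] [AddCommGroup V] [Module ℂ V]
    {ρ : Representation ℂ G V} (hρ : RepIrreducible ρ) : ρ.IsIrreducible where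
  exists_pair_ne := by
    obtain ⟨v, hv⟩ := hρ.1
    refine ⟨⊥, ⊤, fun h ↦ hv ?_⟩
    exact (Submodule.mem_bot ℂ).1 (congr(v ∈ ($h).toSubmodule).mpr Submodule.mem_top)
  eq_bot_or_eq_top W := (hρ.2 W.toSubmodule W.apply_mem_toSubmodule).imp
    (Subrepresentation.ext ·) (Subrepresentation.ext ·)

/-- The comparison of `equivHoms` with Mathlib's space of intertwining maps, along which
multiplicities are transported. -/
def equivHomsEquivIntertwiningMap {G V W : Type} [Group G] [AddCommGroup V] [Module ℂ V]
    [AddCommGroup W] [Module ℂ W] (ρ : Representation ℂ G V) (σ : Representation ℂ G W) :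
    equivHoms ρ σ ≃ₗ[ℂ] IntertwiningMap ρ σ where
  toFun φ := φ.1.intertwiningMap_of_isIntertwiningMap ρ σ φ.2
  invFun φ := ⟨φ.toLinearMap, φ.isIntertwining⟩
  map_add' _ _ := rfl
  map_smul' _ _ := rfl

theorem MultFreeRes.finrank_intertwiningMap_eq_one {H V V' : Type} [Group H] {N : Subgroup H}
    [AddCommGroup V] [Module ℂ V] [FiniteDimensional ℂ V]
    [AddCommGroup V'] [Module ℂ V'] [FiniteDimensional ℂ V']
    {π : Representation ℂ N V} {π' : Representation ℂ H V'} (hmf : MultFreeRes N π')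
    (hπ : RepIrreducible π) {φ : V →ₗ[ℂ] V'} (hφ : φ ∈ equivHoms π (π'.comp N.subtype))
    (hφ0 : φ ≠ 0) : Module.finrank ℂ (IntertwiningMap π (π'.comp N.subtype)) = 1 := by
  rw [← (equivHomsEquivIntertwiningMap π (π'.comp N.subtype)).finrank_eq]
  have : Nontrivial (equivHoms π (π'.comp N.subtype)) :=
    ⟨⟨φ, hφ⟩, 0, fun h ↦ hφ0 congr(($h).val)⟩
  exact le_antisymm (hmf V π hπ) Module.finrank_pos

theorem isSemiInvariantPairing_of_map_eq_smul_dual {k G V : Type*} [Field k] [Group G]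
    [AddCommGroup V] [Module k V] {ρ : Representation k G V} {χ : G → k}
    {f : V →ₗ[k] Module.Dual k V} (hf : ∀ g v, f (ρ g v) = χ g • ρ.dual g (f v)) :
    IsSemiInvariantPairing ρ ρ χ f := fun g u v ↦ by
  simp [hf, Representation.dual_apply, Module.Dual.transpose_apply]

theorem sgn_eq_sgn_of_multiplicity_free_general {k H V V' : Type*} [Field k] [Group H]
    {N : Subgroup H} [AddCommGroup V] [Module k V] [FiniteDimensional k V]
    [AddCommGroup V'] [Module k V'] {π : Representation k N V} [π.IsIrreducible]
    {π' : Representation k H V'} [π'.IsIrreducible]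
    [IsSemisimpleRepresentation (π'.comp N.subtype)]
    (hmult : Module.finrank k (IntertwiningMap π (π'.comp N.subtype)) = 1)
    {χ : H → k} {B : V →ₗ[k] V →ₗ[k] k} (hB : IsSemiInvariantPairing π π (fun n ↦ χ n) B)
    (hB0 : B ≠ 0) {f : V' →ₗ[k] V' →ₗ[k] k} (hf : IsSemiInvariantPairing π' π' χ f)
    (hf0 : f ≠ 0) (ε : k) :
    (∀ u v, B u v = ε * B v u) ↔ ∀ u v, f u v = ε * f v u := by
  obtain ⟨φ, hφ, -⟩ := finrank_eq_one_iff'.1 hmult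
  obtain ⟨P, hPφ⟩ := exists_intertwiningMap_leftInverse hφ
  obtain ⟨t, ht⟩ := hB.exists_apply_eq_mul_of_leftInverse hB0
    (finrank_intertwiningMap_swap_eq_one hmult) hPφ (fun n : N ↦ hf n)
  obtain ⟨v₀, hv₀⟩ : ∃ v, φ v ≠ 0 := DFunLike.ne_iff.1 hφ
  refine ⟨fun hBε ↦ ?_, fun hfε u v ↦ ?_⟩
  · have hφv₀ : (f - ε • f.flip) (φ v₀) = 0 := by
      ext w
      simp only [LinearMap.sub_apply, LinearMap.smul_apply, LinearMap.flip_apply, smul_eq_mul,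
        LinearMap.zero_apply, ht v₀ w, hBε v₀ (P w)]
      ring
    have hzero : f - ε • f.flip = 0 := (hf.sub_smul hf.flip ε).eq_zero_of_apply_eq_zero hv₀ hφv₀
    have hfε : f = ε • f.flip := sub_eq_zero.1 hzero
    exact fun u v ↦ LinearMap.congr_fun₂ hfε u v
  · have ht0 : t ≠ 0 := by
      rintro rfl
      exact hf0 (hf.eq_zero_of_apply_eq_zero hv₀ (LinearMap.ext fun w ↦ by simp [ht v₀ w]))
    have hfB (a b : V) : f (φ a) (φ b) = t * B a b := by rw [(ht a (φ b)).1, hPφ]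
    refine mul_left_cancel₀ ht0 ?_
    rw [← hfB, hfε, hfB, mul_left_comm]

/-- `sgn(π) = sgn(π')`: a nonzero invariant bilinear form
of `π` is symmetric iff the form `B_f` attached to `f` is symmetric (and
skew-symmetric iff `B_f` is). -/
theorem sgn_eq_sgn_of_multiplicity_free
    (H : Type) [Group H] [Finite H]
    (N : Subgroup H) [N.Normal]
    (habel : ∀ a b : H ⧸ N, a * b = b * a)
    -- `π`, irreducible and self-dual on `N`:
    (V : Type) [AddCommGroup V] [Module ℂ V] [FiniteDimensional ℂ V]
    (π : Representation ℂ ↥N V)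
    (hirr : RepIrreducible π) (hsd : RepSelfDual π)
    -- `π'`, irreducible on `H`, restriction to `N` multiplicity-free and
    -- containing `π` as a constituent:
    (V' : Type) [AddCommGroup V'] [Module ℂ V'] [FiniteDimensional ℂ V']
    (π' : Representation ℂ H V')
    (hirr' : RepIrreducible π')
    (hmf : MultFreeRes N π')
    (hcont : ∃ φ : V →ₗ[ℂ] V', φ ≠ 0 ∧ ∀ (n : ↥N) (v : V), φ (π n v) = π' ↑n (φ v))
    -- the character `ν`, trivial on `N`, and `f : π' ≅ π'^∨ ⊗ ν⁻¹`:
    (ν : H →* ℂˣ) (hν : ∀ n : ↥N, ν ↑n = 1)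
    (f : V' ≃ₗ[ℂ] Module.Dual ℂ V')
    (hf : ∀ (g : H) (v : V'), f (π' g v) = ((ν g : ℂ))⁻¹ • (π'.dual g (f v))) :
    -- conclusion: `sgn π = sgn π'`:
    ∀ B : V →ₗ[ℂ] V →ₗ[ℂ] ℂ, B ≠ 0 → InvariantForm π B →
      ((∀ u v : V, B u v = B v u) ↔ (∀ u v : V', f u v = f v u)) ∧
      ((∀ u v : V, B u v = - B v u) ↔ (∀ u v : V', f u v = - f v u)) := by
  intro B hB0 hB
  obtain ⟨φ, hφ0, hφ⟩ := hcont
  have := hirr.isIrreducible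
  have := hirr'.isIrreducible
  have hfχ : IsSemiInvariantPairing π' π' (fun g ↦ (ν g : ℂ)⁻¹) f.toLinearMap :=
    isSemiInvariantPairing_of_map_eq_smul_dual hf
  have hBχ : IsSemiInvariantPairing π π (fun n ↦ (ν n : ℂ)⁻¹) B := fun n u v ↦ by
    simp [hB n u v, hν n]
  have hf0 : f.toLinearMap ≠ 0 := by
    obtain ⟨v, hv⟩ := hirr'.1
    exact fun h ↦ hv (f.map_eq_zero_iff.1 congr($h v))
  have hsgn := sgn_eq_sgn_of_multiplicity_free_general
    (hmf.finrank_intertwiningMap_eq_one hirr hφ hφ0) hBχ hB0 hfχ hf0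
  exact ⟨by simpa using hsgn 1, by simpa using hsgn (-1)⟩
end
end
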